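/- The set {S_B : B a real symmetric 3×3 matrix that is singular and indefinite} is exactly the set of all second-order cone representable slices of S₊³ of dimension 5. That is, a slice S of S₊³ with dim(S) = 5 is socr if and only if S = S_B for some singular indefinite B ∈ S³, and conversely every such S_B is a 5-dimensional socr slice. -/

import Mathlib

/-! A five-dimensional slice is cut out by a hyperplane `B^⊥` of the space of symmetric matrices,
and `B` is indefinite: were `± B` positive semidefinite, all elements of `S_B` would kill a common
nonzero vector, so `S_B` would span too little (`exists_symm_orth`, `not_posSemidef_of_span`).
An indefinite `B` is congruent to the form `2c·x₀x₁ + d·x₂²` with `c ≠ 0`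
(`exists_normal_form`), and it is singular exactly when `d = 0`.

If `d = 0`, the slice is, up to congruence, the set of positive semidefinite `A` with `A₀₁ = 0`.
Such a matrix splits as a sum of two positive semidefinite blocks supported on the index sets
`{0, 2}` and `{1, 2}` (`arrowMap_image`). Since `Q` is isomorphic to the cone of positive
semidefinite `2 × 2` matrices, the slice is a linear image of `Q²`, and it spans a space of
dimension five (`socr_of_singular`).

If `d ≠ 0`, the slice contains the squares `x xᵀ` of infinitely many vectors on a smooth conic, any
three of which are linearly independent. This contradicts representability
(`exists_coplanar_of_isSOCR`). Suppose `S = f(Qᵐ ∩ W)` and lift each square `x_n x_nᵀ` to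
`y_n ∈ Qᵐ ∩ W`. In each factor `Q`, a proper face is `0` or a ray, so by the infinite pigeonhole
principle one can pass to an infinite set of indices for which the components are all zero, or all
on one ray, or on pairwise different rays; then the component of `y_k` lies in the smallest face
containing those of `y_i` and `y_j`. Hence `y_i + y_j - ε y_k ∈ Qᵐ ∩ W` for some `ε > 0`. For
`l = x_i × x_j`, the nonnegative functional `A ↦ lᵀ A l` takes the value `-ε (l · x_k)²` on the
image of this point, so `l · x_k = 0` and `x_i, x_j, x_k` are dependent. -/

open Matrix

noncomputable section

/-- The three-dimensional Lorentz cone `Q = {x ∈ ℝ³ : x₃ ≥ √(x₁² + x₂²)}`. -/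
def lorentzCone : Set (Fin 3 → ℝ) :=
  {x | Real.sqrt (x 0 ^ 2 + x 1 ^ 2) ≤ x 2}

/-- The `m`-fold Cartesian power `Qᵐ ⊆ (ℝ³)ᵐ` of the Lorentz cone. -/
def lorentzPow (m : ℕ) : Set (Fin m → Fin 3 → ℝ) :=
  {x | ∀ i, x i ∈ lorentzCone}

/-- The cone of real symmetric positive semidefinite `k × k` matrices. -/
def psdCone (k : ℕ) : Set (Matrix (Fin k) (Fin k) ℝ) :=
  {A | A.PosSemidef}

/-- For `B ∈ Sᵏ`, the slice `S_B = {A ∈ S₊ᵏ : tr(AB) = 0}` of the psd cone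
orthogonal to `B` w.r.t. the trace scalar product. -/
def sliceOrth (k : ℕ) (B : Matrix (Fin k) (Fin k) ℝ) : Set (Matrix (Fin k) (Fin k) ℝ) :=
  {A | A.PosSemidef ∧ Matrix.trace (A * B) = 0}

/-- `S` is a slice of `S₊ᵏ`: the intersection of the psd cone with a linear
subspace of the space of symmetric matrices. -/
def IsSlice (k : ℕ) (S : Set (Matrix (Fin k) (Fin k) ℝ)) : Prop :=
  ∃ L : Submodule ℝ (Matrix (Fin k) (Fin k) ℝ),
    (∀ A ∈ L, A.IsSymm) ∧ S = psdCone k ∩ (L : Set (Matrix (Fin k) (Fin k) ℝ))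

/-- A set `S` in a real vector space is second-order cone representable (socr)
if it is the image under a linear map of the intersection of `Qᵐ` with a
linear subspace of `(ℝ³)ᵐ`, for some positive integer `m`. -/
def IsSOCR {V : Type*} [AddCommGroup V] [Module ℝ V] (S : Set V) : Prop :=
  ∃ m : ℕ, 0 < m ∧ ∃ W : Submodule ℝ (Fin m → Fin 3 → ℝ),
    ∃ f : (Fin m → Fin 3 → ℝ) →ₗ[ℝ] V,
      S = f '' (lorentzPow m ∩ (W : Set (Fin m → Fin 3 → ℝ)))

/-- A symmetric matrix is indefinite if it is neither positive semidefinite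
nor negative semidefinite. -/
def Indefinite (k : ℕ) (B : Matrix (Fin k) (Fin k) ℝ) : Prop :=
  ¬ B.PosSemidef ∧ ¬ (-B).PosSemidef

/-! ### Lorentz cone and the obstruction to second-order cone representability -/

lemma mem_lorentzCone_iff (x : Fin 3 → ℝ) :
    x ∈ lorentzCone ↔ x 0 ^ 2 + x 1 ^ 2 ≤ x 2 ^ 2 ∧ 0 ≤ x 2 := by
  simp only [lorentzCone, Set.mem_ofPred_eq]
  rw [Real.sqrt_le_iff, and_comm]

lemma lorentzCone_smul {x : Fin 3 → ℝ} (hx : x ∈ lorentzCone) {c : ℝ} (hc : 0 ≤ c) :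
    c • x ∈ lorentzCone := by
  rw [mem_lorentzCone_iff] at *
  simp only [Pi.smul_apply, smul_eq_mul]
  refine ⟨?_, mul_nonneg hc hx.2⟩
  nlinarith [mul_le_mul_of_nonneg_left hx.1 (sq_nonneg c)]

lemma lorentzCone_add {x y : Fin 3 → ℝ} (hx : x ∈ lorentzCone) (hy : y ∈ lorentzCone) :
    x + y ∈ lorentzCone := by
  rw [mem_lorentzCone_iff] at *
  simp only [Pi.add_apply]
  obtain ⟨hx, hx'⟩ := hx
  obtain ⟨hy, hy'⟩ := hy
  refine ⟨?_, add_nonneg hx' hy'⟩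
  have h : x 0 * y 0 + x 1 * y 1 ≤ x 2 * y 2 := by
    refine le_of_abs_le (abs_le_of_sq_le_sq ?_ (mul_nonneg hx' hy'))
    have h1 := mul_le_mul hx hy (by positivity) (by positivity)
    nlinarith [sq_nonneg (x 0 * y 1 - x 1 * y 0)]
  nlinarith

lemma eq_zero_of_mem_lorentzCone {x : Fin 3 → ℝ} (hx : x ∈ lorentzCone) (h : x 2 = 0) :
    x = 0 := by
  rw [mem_lorentzCone_iff, h] at hx
  have h0 : x 0 = 0 := by nlinarith [hx.1, sq_nonneg (x 0), sq_nonneg (x 1)]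
  have h1 : x 1 = 0 := by nlinarith [hx.1, sq_nonneg (x 0), sq_nonneg (x 1)]
  ext i
  fin_cases i <;> simp [h0, h1, h]

open Filter Topology in
/-- `z` lies in the smallest face of the Lorentz cone containing `x + y`, expressed by the
possibility of moving from `x + y` in direction `-z` without leaving the cone. -/
def FaceGood (x y z : Fin 3 → ℝ) : Prop :=
  ∀ᶠ ε : ℝ in 𝓝[>] 0, x + y - ε • z ∈ lorentzCone

open Filter Topology in
/-- Two elements of the Lorentz cone on different rays have a sum in the interior, so the smallest
face containing it is the whole cone. -/
lemma faceGood_of_not_parallel {x y : Fin 3 → ℝ} (hx : x ∈ lorentzCone) (hy : y ∈ lorentzCone)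
    (hx2 : x 2 ≠ 0) (hy2 : y 2 ≠ 0)
    (hne : (x 0 / x 2, x 1 / x 2) ≠ (y 0 / y 2, y 1 / y 2)) (z : Fin 3 → ℝ) :
    FaceGood x y z := by
  rw [mem_lorentzCone_iff] at hx hy
  have px : 0 < x 2 := lt_of_le_of_ne hx.2 (Ne.symm hx2)
  have py : 0 < y 2 := lt_of_le_of_ne hy.2 (Ne.symm hy2)
  have hpos : 0 < (x 0 * y 2 - y 0 * x 2) ^ 2 + (x 1 * y 2 - y 1 * x 2) ^ 2 := by
    by_contra hcon
    apply hne
    have h0 : x 0 * y 2 - y 0 * x 2 = 0 := by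
      nlinarith [sq_nonneg (x 0 * y 2 - y 0 * x 2), sq_nonneg (x 1 * y 2 - y 1 * x 2)]
    have h1 : x 1 * y 2 - y 1 * x 2 = 0 := by
      nlinarith [sq_nonneg (x 0 * y 2 - y 0 * x 2), sq_nonneg (x 1 * y 2 - y 1 * x 2)]
    rw [Prod.mk.injEq, div_eq_div_iff hx2 hy2, div_eq_div_iff hx2 hy2]
    constructor <;> linarith
  have hlt : x 0 * y 0 + x 1 * y 1 < x 2 * y 2 := by
    have h1 := mul_le_mul_of_nonneg_right hx.1 (sq_nonneg (y 2))
    have h2 := mul_le_mul_of_nonneg_right hy.1 (sq_nonneg (x 2))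
    have h3 : 0 < (2 * (x 2 * y 2)) * (x 2 * y 2 - (x 0 * y 0 + x 1 * y 1)) := by nlinarith
    have := (mul_pos_iff_of_pos_left (by positivity)).1 h3
    linarith
  have hlt' : (x 0 + y 0) ^ 2 + (x 1 + y 1) ^ 2 < (x 2 + y 2) ^ 2 := by nlinarith [hx.1, hy.1]
  have e1 : ∀ᶠ ε : ℝ in 𝓝 0, (x 0 + y 0 - ε * z 0) ^ 2 + (x 1 + y 1 - ε * z 1) ^ 2
      < (x 2 + y 2 - ε * z 2) ^ 2 := by
    apply ContinuousAt.eventually_lt (by fun_prop) (by fun_prop)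
    simpa using hlt'
  have e2 : ∀ᶠ ε : ℝ in 𝓝 0, 0 < x 2 + y 2 - ε * z 2 := by
    apply ContinuousAt.eventually_lt (by fun_prop) (by fun_prop)
    simpa using by linarith
  refine Filter.Eventually.filter_mono nhdsWithin_le_nhds ?_
  filter_upwards [e1, e2] with ε h1 h2
  rw [mem_lorentzCone_iff]
  exact ⟨h1.le, h2.le⟩

open Filter Topology in
lemma faceGood_of_parallel {x y z : Fin 3 → ℝ} (hx : x ∈ lorentzCone) (hy : y ∈ lorentzCone)
    (hx2 : x 2 ≠ 0) (hz2 : z 2 ≠ 0)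
    (heq : (x 0 / x 2, x 1 / x 2) = (z 0 / z 2, z 1 / z 2)) : FaceGood x y z := by
  rw [Prod.mk.injEq, div_eq_div_iff hx2 hz2, div_eq_div_iff hx2 hz2] at heq
  have hz : z = (z 2 / x 2) • x := by
    ext i
    fin_cases i
    · simp; field_simp; linarith [heq.1]
    · simp; field_simp; linarith [heq.2]
    · simp; field_simp
  have e1 : ∀ᶠ ε : ℝ in 𝓝 0, ε * (z 2 / x 2) < 1 := by
    apply ContinuousAt.eventually_lt (by fun_prop) (by fun_prop)
    simp
  refine Filter.Eventually.filter_mono nhdsWithin_le_nhds ?_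
  filter_upwards [e1] with ε h1
  have : x + y - ε • z = (1 - ε * (z 2 / x 2)) • x + y := by
    rw [hz]
    simp only [sub_smul, one_smul, smul_smul, Pi.smul_apply, smul_eq_mul]
    rw [div_mul_cancel₀ _ hx2]
    abel
  rw [this]
  exact lorentzCone_add (lorentzCone_smul hx (by linarith)) hy

/-- Any infinite family in the Lorentz cone has an infinite subfamily in which every element lies
in the smallest face spanned by any two others: the members of the subfamily are all zero, or all
on one ray, or on pairwise different rays. -/
lemma exists_infinite_faceGood (z : ℕ → Fin 3 → ℝ) (hz : ∀ n, z n ∈ lorentzCone)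
    {T : Set ℕ} (hT : T.Infinite) :
    ∃ T' ⊆ T, T'.Infinite ∧
      ∀ i ∈ T', ∀ j ∈ T', ∀ k ∈ T', i ≠ j → FaceGood (z i) (z j) (z k) := by
  by_cases h0 : (T ∩ {n | z n 2 = 0}).Infinite
  · refine ⟨_, Set.inter_subset_left, h0, fun i _ j _ k hk _ => ?_⟩
    have : z k = 0 := eq_zero_of_mem_lorentzCone (hz k) hk.2
    simpa [FaceGood, this] using lorentzCone_add (hz i) (hz j)
  set T1 := T \ {n | z n 2 = 0} with hT1
  have hT1inf : T1.Infinite := by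
    intro hfin
    apply hT
    rw [← Set.inter_union_sdiff T {n | z n 2 = 0}]
    exact (Set.not_infinite.1 h0).union hfin
  have hne : ∀ n ∈ T1, z n 2 ≠ 0 := fun n hn => hn.2
  set g : ℕ → ℝ × ℝ := fun n => (z n 0 / z n 2, z n 1 / z n 2) with hg
  by_cases hfin : (g '' T1).Finite
  · have : ∃ x ∈ g '' T1, (T1 ∩ g ⁻¹' {x}).Infinite := by
      by_contra! hcon
      exact hT1inf (Set.Finite.of_finite_fibers g hfin hcon)
    obtain ⟨x, -, hx⟩ := this
    refine ⟨_, Set.inter_subset_left.trans Set.sdiff_subset, hx, fun i hi j _ k hk _ => ?_⟩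
    exact faceGood_of_parallel (hz i) (hz j) (hne i hi.1) (hne k hk.1)
      ((show g i = x from hi.2).trans (show g k = x from hk.2).symm)
  · obtain ⟨T', hsub, hbij⟩ := Set.exists_subset_bijOn T1 g
    refine ⟨T', hsub.trans Set.sdiff_subset, ?_, fun i hi j hj k _ hij => ?_⟩
    · intro hT'
      exact hfin (hbij.image_eq ▸ hT'.image g)
    · exact faceGood_of_not_parallel (hz i) (hz j) (hne i (hsub hi)) (hne j (hsub hj))
        (fun h => hij (hbij.injOn hi hj h)) _

lemma exists_infinite_faceGood_pow {m : ℕ} (y : ℕ → Fin m → Fin 3 → ℝ)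
    (hy : ∀ n, y n ∈ lorentzPow m) (F : Finset (Fin m)) :
    ∃ T : Set ℕ, T.Infinite ∧ ∀ s ∈ F, ∀ i ∈ T, ∀ j ∈ T, ∀ k ∈ T, i ≠ j →
      FaceGood (y i s) (y j s) (y k s) := by
  induction F using Finset.induction_on with
  | empty => exact ⟨Set.univ, Set.infinite_univ, by simp⟩
  | insert a F _ ih =>
    obtain ⟨T, hT, h⟩ := ih
    obtain ⟨T', hsub, hT', h'⟩ := exists_infinite_faceGood (fun n => y n a) (fun n => hy n a) hT
    refine ⟨T', hT', fun s hs i hi j hj k hk hij => ?_⟩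
    rcases Finset.mem_insert.1 hs with rfl | hs
    · exact h' i hi j hj k hk hij
    · exact h s hs i (hsub hi) j (hsub hj) k (hsub hk) hij

/-- A second-order cone representable set of positive semidefinite `3 × 3` matrices cannot contain
infinitely many squares `x xᵀ` of vectors `x` in general position: lifting them to `Qᵐ`, some
triple has the lift of the third vector in the smallest face containing the other two, whereas the
form `A ↦ lᵀ A l` with `l = x i ×₃ x j` exposes a face containing only the squares of `x i, x j`. -/
lemma exists_coplanar_of_isSOCR {S : Set (Matrix (Fin 3) (Fin 3) ℝ)} (hS : IsSOCR S)
    (hpsd : ∀ A ∈ S, A.PosSemidef) (x : ℕ → Fin 3 → ℝ)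
    (hx : ∀ n, vecMulVec (x n) (x n) ∈ S) :
    ∃ i j k, i ≠ j ∧ i ≠ k ∧ j ≠ k ∧ Matrix.det ![x k, x i, x j] = 0 := by
  obtain ⟨m, -, W, f, rfl⟩ := hS
  choose y hy hfy using hx
  obtain ⟨T, hT, hgood⟩ := exists_infinite_faceGood_pow y (fun n => (hy n).1) Finset.univ
  obtain ⟨i, hi⟩ := hT.nonempty
  obtain ⟨j, hj, hji⟩ := hT.exists_notMem_finset {i}
  obtain ⟨k, hk, hkij⟩ := hT.exists_notMem_finset {i, j}
  simp only [Finset.mem_insert, Finset.mem_singleton, not_or] at hji hkij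
  refine ⟨i, j, k, Ne.symm hji, Ne.symm hkij.1, Ne.symm hkij.2, ?_⟩
  have hall : ∀ᶠ ε : ℝ in nhdsWithin 0 (Set.Ioi 0), ∀ s,
      y i s + y j s - ε • y k s ∈ lorentzCone :=
    Filter.eventually_all.2 fun s => hgood s (Finset.mem_univ s) i hi j hj k hk (Ne.symm hji)
  obtain ⟨ε, hε, hεpos⟩ := (hall.and self_mem_nhdsWithin).exists
  have hεpos : 0 < ε := hεpos
  have hmem : y i + y j - ε • y k ∈ lorentzPow m ∩ (W : Set _) :=
    ⟨fun s => hε s, W.sub_mem (W.add_mem (hy i).2 (hy j).2) (W.smul_mem _ (hy k).2)⟩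
  have h1 := (hpsd _ ⟨_, hmem, rfl⟩).dotProduct_mulVec_nonneg ((x i) ⨯₃ (x j))
  rw [← triple_product_eq_det]
  have hi0 := dot_self_cross (x i) (x j)
  have hj0 := dot_cross_self (x i) (x j)
  set l := (x i) ⨯₃ (x j)
  simp only [map_sub, map_add, map_smul, hfy, sub_mulVec, add_mulVec, smul_mulVec,
    vecMulVec_mulVec, hi0, hj0] at h1
  simp at h1
  rw [dotProduct_comm l (x k)] at h1
  by_contra hne
  have : 0 < (x k ⬝ᵥ l) * (x k ⬝ᵥ l) := mul_self_pos.2 hne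
  nlinarith [mul_pos hεpos this]

/-! ### Normal form of an indefinite symmetric matrix -/

lemma dotProduct_mulVec_symm {B : Matrix (Fin 3) (Fin 3) ℝ} (hB : B.IsSymm) (x y : Fin 3 → ℝ) :
    x ⬝ᵥ B *ᵥ y = y ⬝ᵥ B *ᵥ x := by
  rw [dotProduct_mulVec, ← mulVec_transpose, hB.eq, dotProduct_comm]

lemma exists_neg_of_not_posSemidef {B : Matrix (Fin 3) (Fin 3) ℝ} (hB : B.IsSymm)
    (h : ¬ B.PosSemidef) : ∃ v, v ⬝ᵥ B *ᵥ v < 0 := by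
  by_contra! hcon
  refine h (PosSemidef.of_dotProduct_mulVec_nonneg ?_ fun v => by simpa using hcon v)
  rw [IsHermitian, conjTranspose_eq_transpose_of_trivial, hB.eq]

/-- An indefinite symmetric matrix has a hyperbolic pair: two isotropic vectors that are not
orthogonal. They are the zeros of the form on a line through a negative vector in the direction of
a positive one. -/
lemma exists_hyperbolic_pair {B : Matrix (Fin 3) (Fin 3) ℝ} (hB : B.IsSymm)
    (hind : Indefinite 3 B) :
    ∃ p q, p ⬝ᵥ B *ᵥ p = 0 ∧ q ⬝ᵥ B *ᵥ q = 0 ∧ p ⬝ᵥ B *ᵥ q ≠ 0 := by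
  obtain ⟨v, hv⟩ := exists_neg_of_not_posSemidef hB hind.1
  obtain ⟨u, hu⟩ := exists_neg_of_not_posSemidef hB.neg hind.2
  have hu : 0 < u ⬝ᵥ B *ᵥ u := by simpa [neg_mulVec] using hu
  have hexp : ∀ s t : ℝ, (v + s • u) ⬝ᵥ B *ᵥ (v + t • u) =
      v ⬝ᵥ B *ᵥ v + (s + t) * (u ⬝ᵥ B *ᵥ v) + s * t * (u ⬝ᵥ B *ᵥ u) := by
    intro s t
    simp only [mulVec_add, mulVec_smul, dotProduct_add, add_dotProduct, dotProduct_smul,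
      smul_dotProduct, smul_eq_mul, dotProduct_mulVec_symm hB v u]
    ring
  set α := u ⬝ᵥ B *ᵥ u
  set β := u ⬝ᵥ B *ᵥ v
  set γ := v ⬝ᵥ B *ᵥ v
  have hD : 0 < β ^ 2 - α * γ := by nlinarith [sq_nonneg β, mul_pos hu (neg_pos.2 hv)]
  have hs := Real.sq_sqrt hD.le
  set r := Real.sqrt (β ^ 2 - α * γ)
  have hα : α ≠ 0 := hu.ne'
  refine ⟨v + ((-β + r) / α) • u, v + ((-β - r) / α) • u, ?_, ?_, ?_⟩
  · rw [hexp]; field_simp; linear_combination hs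
  · rw [hexp]; field_simp; linear_combination hs
  · rw [hexp]
    have : γ + ((-β + r) / α + (-β - r) / α) * β + (-β + r) / α * ((-β - r) / α) * α
        = - 2 * (β ^ 2 - α * γ) / α := by
      field_simp; linear_combination -hs
    rw [this]
    exact div_ne_zero (by linarith) hα

/-- Every indefinite symmetric `3 × 3` matrix is congruent to `2c·x₀x₁ + d·x₂²` with `c ≠ 0`. -/
lemma exists_normal_form {B : Matrix (Fin 3) (Fin 3) ℝ} (hB : B.IsSymm)
    (hind : Indefinite 3 B) :
    ∃ (R : Matrix (Fin 3) (Fin 3) ℝ) (c d : ℝ), R.det ≠ 0 ∧ c ≠ 0 ∧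
      Rᵀ * B * R = !![0, c, 0; c, 0, 0; 0, 0, d] := by
  obtain ⟨p, q, hp, hq, hpq⟩ := exists_hyperbolic_pair hB hind
  obtain ⟨r, hr0, hr⟩ := (exists_mulVec_eq_zero_iff (M := Matrix.of ![B *ᵥ p, B *ᵥ q, 0])).2
    (det_eq_zero_of_row_eq_zero 2 (by intro j; simp))
  have hrp : r ⬝ᵥ B *ᵥ p = 0 := by
    rw [dotProduct_comm]; simpa using congrFun hr 0
  have hrq : r ⬝ᵥ B *ᵥ q = 0 := by
    rw [dotProduct_comm]; simpa using congrFun hr 1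
  have hN : ((Matrix.of ![p, q, r])ᵀ)ᵀ * B * (Matrix.of ![p, q, r])ᵀ =
      !![0, p ⬝ᵥ B *ᵥ q, 0; p ⬝ᵥ B *ᵥ q, 0, 0; 0, 0, r ⬝ᵥ B *ᵥ r] := by
    have hqr := (dotProduct_mulVec_symm hB q r).trans hrq
    have hpr := (dotProduct_mulVec_symm hB p r).trans hrp
    have hqp := dotProduct_mulVec_symm hB q p
    have hentry : ∀ i j, (((Matrix.of ![p, q, r])ᵀ)ᵀ * B * (Matrix.of ![p, q, r])ᵀ) i j =
        ![p, q, r] i ⬝ᵥ B *ᵥ ![p, q, r] j := by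
      intro i j
      rw [mul_assoc]
      rfl
    ext i j
    rw [hentry]
    fin_cases i <;> fin_cases j <;> simp only [Fin.zero_eta, Fin.mk_one, Fin.reduceFinMk] <;>
      simp [-mulVec_cons, hp, hq, hrp, hrq, hqr, hpr, hqp]
  refine ⟨(Matrix.of ![p, q, r])ᵀ, p ⬝ᵥ B *ᵥ q, r ⬝ᵥ B *ᵥ r, ?_, hpq, hN⟩
  intro hdet
  obtain ⟨v, hv0, hv⟩ := exists_mulVec_eq_zero_iff.2 hdet
  have h1 : (!![0, p ⬝ᵥ B *ᵥ q, 0; p ⬝ᵥ B *ᵥ q, 0, 0; 0, 0, r ⬝ᵥ B *ᵥ r]) *ᵥ v = 0 := by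
    rw [← hN, ← mulVec_mulVec, hv, mulVec_zero]
  generalize p ⬝ᵥ B *ᵥ q = c at h1 hpq
  have v1 : v 1 = 0 := by
    have := congrFun h1 0
    simpa [mulVec, dotProduct, Fin.sum_univ_three, hpq] using this
  have v0 : v 0 = 0 := by
    have := congrFun h1 1
    simpa [mulVec, dotProduct, Fin.sum_univ_three, hpq] using this
  have v2 : v 2 = 0 := by
    by_contra h2
    apply hr0
    ext i
    have := congrFun hv i
    simpa [mulVec, dotProduct, Fin.sum_univ_three, v0, v1, h2] using this
  apply hv0
  ext i
  fin_cases i <;> simp [v0, v1, v2]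

lemma trace_conj_mul (R A B : Matrix (Fin 3) (Fin 3) ℝ) (hA : A.IsSymm) {c d : ℝ}
    (hN : Rᵀ * B * R = !![0, c, 0; c, 0, 0; 0, 0, d]) :
    trace (R * A * Rᵀ * B) = 2 * c * A 0 1 + d * A 2 2 := by
  have : trace (R * A * Rᵀ * B) = trace (A * (Rᵀ * B * R)) := by
    rw [mul_assoc, mul_assoc, trace_mul_comm]
    simp only [mul_assoc]
  rw [this, hN]
  have h := hA.apply 0 1
  simp [trace, Fin.sum_univ_three, mul_apply, h]
  ring

lemma posSemidef_conj {R : Matrix (Fin 3) (Fin 3) ℝ} (hR : R.det ≠ 0)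
    (A : Matrix (Fin 3) (Fin 3) ℝ) : (R * A * Rᵀ).PosSemidef ↔ A.PosSemidef := by
  rw [← conjTranspose_eq_transpose_of_trivial]
  exact IsUnit.posSemidef_star_right_conjugate_iff
    ((isUnit_iff_isUnit_det R).2 (isUnit_iff_ne_zero.2 hR))

lemma isSymm_of_posSemidef {A : Matrix (Fin 3) (Fin 3) ℝ} (hA : A.PosSemidef) : A.IsSymm := by
  have := hA.isHermitian
  rwa [IsHermitian, conjTranspose_eq_transpose_of_trivial] at this

lemma sliceOrth_eq_image {R B : Matrix (Fin 3) (Fin 3) ℝ} (hR : R.det ≠ 0) {c d : ℝ}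
    (hN : Rᵀ * B * R = !![0, c, 0; c, 0, 0; 0, 0, d]) :
    sliceOrth 3 B =
      (fun A => R * A * Rᵀ) '' {A | A.PosSemidef ∧ 2 * c * A 0 1 + d * A 2 2 = 0} := by
  have hu : IsUnit R.det := isUnit_iff_ne_zero.2 hR
  ext A
  constructor
  · rintro ⟨hA, ht⟩
    have hA' : R * (R⁻¹ * A * R⁻¹ᵀ) * Rᵀ = A := by
      have h1 : R⁻¹ᵀ * Rᵀ = 1 := by rw [← transpose_mul, mul_nonsing_inv _ hu, transpose_one]
      calc _ = (R * R⁻¹) * A * (R⁻¹ᵀ * Rᵀ) := by simp only [mul_assoc]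
        _ = A := by rw [h1, mul_nonsing_inv _ hu, one_mul, mul_one]
    have hpsd : (R⁻¹ * A * R⁻¹ᵀ).PosSemidef := by
      rw [← posSemidef_conj hR, hA']; exact hA
    refine ⟨R⁻¹ * A * R⁻¹ᵀ, ⟨hpsd, ?_⟩, hA'⟩
    rw [← trace_conj_mul R _ B (isSymm_of_posSemidef hpsd) hN, hA', ht]
  · rintro ⟨A', ⟨h1, h2⟩, rfl⟩
    exact ⟨(posSemidef_conj hR A').2 h1, by
      rw [trace_conj_mul R _ B (isSymm_of_posSemidef h1) hN, h2]⟩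

/-- If `B` were nonsingular, so that `d ≠ 0`, the conic `xᵀ B x = 0` would contain, in the coordinates of the
normal form, the points `(1, -(d / 2c) n², n)`, and no three of them are collinear. -/
lemma det_eq_zero_of_isSOCR {B : Matrix (Fin 3) (Fin 3) ℝ} (hB : B.IsSymm)
    (hind : Indefinite 3 B) (hS : IsSOCR (sliceOrth 3 B)) : B.det = 0 := by
  obtain ⟨R, c, d, hR, hc, hN⟩ := exists_normal_form hB hind
  by_cases hd : d = 0
  · have h := congrArg det hN
    rw [det_mul, det_mul, det_transpose] at h
    rw [show det !![0, c, 0; c, 0, 0; 0, 0, d] = 0 by simp [det_fin_three, hd]] at h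
    simpa [hR] using h
  exfalso
  set w : ℕ → Fin 3 → ℝ := fun n => ![1, -(d / (2 * c)) * n ^ 2, n] with hw
  have hmem : ∀ n, vecMulVec (R *ᵥ w n) (R *ᵥ w n) ∈ sliceOrth 3 B := by
    intro n
    rw [sliceOrth_eq_image hR hN]
    refine ⟨vecMulVec (w n) (w n), ⟨?_, ?_⟩, ?_⟩
    · simpa using posSemidef_vecMulVec_self_star (w n)
    · simp [vecMulVec_apply, hw]
      field_simp
      ring
    · simp only [mul_vecMulVec, vecMulVec_mul, vecMul_transpose]
  obtain ⟨i, j, k, hij, hik, hjk, hdet⟩ :=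
    exists_coplanar_of_isSOCR hS (fun A hA => hA.1) _ hmem
  have hfac : (![R *ᵥ w k, R *ᵥ w i, R *ᵥ w j] : Matrix (Fin 3) (Fin 3) ℝ) =
      (Matrix.of ![w k, w i, w j]) * Rᵀ := by
    ext a b
    fin_cases a <;> simp [mul_apply, mulVec, dotProduct, Fin.sum_univ_three] <;> ring
  rw [hfac, det_mul, det_transpose, mul_eq_zero, or_iff_left hR] at hdet
  have hval : det (Matrix.of ![w k, w i, w j]) =
      d / (2 * c) * (((i : ℝ) - j) * ((i : ℝ) - k) * ((k : ℝ) - j)) := by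
    simp [det_fin_three, hw]
    ring
  rw [hval] at hdet
  have h1 : (i : ℝ) - j ≠ 0 := sub_ne_zero.2 (by exact_mod_cast hij)
  have h2 : (i : ℝ) - k ≠ 0 := sub_ne_zero.2 (by exact_mod_cast hik)
  have h3 : (k : ℝ) - j ≠ 0 := sub_ne_zero.2 (by exact_mod_cast hjk.symm)
  exact absurd hdet (by positivity)

/-! ### Singular indefinite matrices give second-order cone representable slices -/

/-- The linear map sending a pair of vectors of `ℝ³`, read as symmetric `2 × 2` matrices
`[[z₂ + z₀, z₁], [z₁, z₂ - z₀]]`, to the sum of these matrices placed in the rows and columns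
`{0, 2}` and `{1, 2}` of a `3 × 3` matrix. -/
def arrowMap : (Fin 2 → Fin 3 → ℝ) →ₗ[ℝ] Matrix (Fin 3) (Fin 3) ℝ where
  toFun z := !![z 0 2 + z 0 0, 0, z 0 1; 0, z 1 2 + z 1 0, z 1 1;
    z 0 1, z 1 1, (z 0 2 - z 0 0) + (z 1 2 - z 1 0)]
  map_add' x y := by
    ext i j
    fin_cases i <;> fin_cases j <;> simp <;> ring
  map_smul' c x := by
    ext i j
    fin_cases i <;> fin_cases j <;> simp <;> ring

/-- The linear map `A ↦ R A Rᵀ`. -/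
def conjMap (R : Matrix (Fin 3) (Fin 3) ℝ) :
    Matrix (Fin 3) (Fin 3) ℝ →ₗ[ℝ] Matrix (Fin 3) (Fin 3) ℝ where
  toFun A := R * A * Rᵀ
  map_add' x y := by simp [mul_add, add_mul]
  map_smul' c x := by simp

lemma quad_nonneg {a b e : ℝ} (ha : 0 ≤ a) (he : 0 ≤ e) (h : b ^ 2 ≤ a * e) (u w : ℝ) :
    0 ≤ a * u ^ 2 + 2 * b * u * w + e * w ^ 2 := by
  rcases ha.eq_or_lt with rfl | ha
  · have : b = 0 := by nlinarith
    subst this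
    nlinarith [mul_nonneg he (sq_nonneg w)]
  · have : 0 ≤ a * (a * u ^ 2 + 2 * b * u * w + e * w ^ 2) := by
      nlinarith [sq_nonneg (a * u + b * w), mul_le_mul_of_nonneg_right h (sq_nonneg w)]
    exact (mul_nonneg_iff_of_pos_left ha).1 this

lemma mem_lorentzCone_disc {z : Fin 3 → ℝ} :
    z ∈ lorentzCone ↔ 0 ≤ z 2 + z 0 ∧ 0 ≤ z 2 - z 0 ∧ z 1 ^ 2 ≤ (z 2 + z 0) * (z 2 - z 0) := by
  rw [mem_lorentzCone_iff]
  constructor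
  · rintro ⟨h1, h2⟩
    have : |z 0| ≤ z 2 := abs_le_of_sq_le_sq (by nlinarith [sq_nonneg (z 1)]) h2
    have := abs_le.1 this
    exact ⟨by linarith, by linarith, by nlinarith⟩
  · rintro ⟨h1, h2, h3⟩
    exact ⟨by nlinarith, by linarith⟩

/-- A positive semidefinite matrix with vanishing `(0, 1)` entry is a sum of positive semidefinite
matrices supported on `{0, 2}` and `{1, 2}`: the corner entry is split by a Schur complement. -/
lemma arrowMap_image :
    arrowMap '' lorentzPow 2 = {A | A.PosSemidef ∧ A 0 1 = 0} := by
  ext A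
  constructor
  · rintro ⟨z, hz, rfl⟩
    obtain ⟨h1, h2, h3⟩ := mem_lorentzCone_disc.1 (hz 0)
    obtain ⟨k1, k2, k3⟩ := mem_lorentzCone_disc.1 (hz 1)
    refine ⟨PosSemidef.of_dotProduct_mulVec_nonneg ?_ fun v => ?_, by simp [arrowMap]⟩
    · ext i j
      fin_cases i <;> fin_cases j <;> simp [arrowMap]
    · have e1 := quad_nonneg h1 h2 h3 (v 0) (v 2)
      have e2 := quad_nonneg k1 k2 k3 (v 1) (v 2)
      simp [arrowMap, dotProduct, mulVec, Fin.sum_univ_three]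
      nlinarith
  · rintro ⟨hA, h01⟩
    have hs := isSymm_of_posSemidef hA
    have h10 : A 1 0 = 0 := by rw [hs.apply 0 1, h01]
    have h20 : A 2 0 = A 0 2 := hs.apply 0 2
    have h21 : A 2 1 = A 1 2 := hs.apply 1 2
    have h0 : 0 ≤ A 0 0 := hA.diag_nonneg
    have h1 : 0 ≤ A 1 1 := hA.diag_nonneg
    have h2 : 0 ≤ A 2 2 := hA.diag_nonneg
    have m02 := (hA.submatrix ![0, 2]).det_nonneg
    have m12 := (hA.submatrix ![1, 2]).det_nonneg
    have m := hA.det_nonneg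
    rw [det_fin_two] at m02 m12
    simp only [submatrix_apply, cons_val_zero, cons_val_one, h20, h21] at m02 m12
    simp [det_fin_three, h20, h21, h01, h10] at m
    obtain ⟨e, he0, he1, he2, he3⟩ : ∃ e, 0 ≤ e ∧ e ≤ A 2 2 ∧ A 0 2 ^ 2 ≤ A 0 0 * e ∧
        A 1 2 ^ 2 ≤ A 1 1 * (A 2 2 - e) := by
      rcases h0.eq_or_lt with h | h
      · rw [← h] at m02
        exact ⟨0, le_rfl, h2, by nlinarith, by nlinarith⟩
      · refine ⟨A 0 2 ^ 2 / A 0 0, by positivity, ?_, ?_, ?_⟩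
        · rw [div_le_iff₀ h]; nlinarith
        · rw [mul_div_cancel₀ _ h.ne']
        · have : A 1 1 * (A 2 2 - A 0 2 ^ 2 / A 0 0) =
              (A 0 0 * A 1 1 * A 2 2 - A 1 1 * A 0 2 ^ 2) / A 0 0 := by field_simp
          rw [this, le_div_iff₀ h]
          nlinarith
    refine ⟨![![(A 0 0 - e) / 2, A 0 2, (A 0 0 + e) / 2],
      ![(A 1 1 - (A 2 2 - e)) / 2, A 1 2, (A 1 1 + (A 2 2 - e)) / 2]], ?_, ?_⟩
    · intro i
      rw [mem_lorentzCone_disc]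
      fin_cases i
      · simp; exact ⟨by linarith, by linarith, by nlinarith⟩
      · simp; exact ⟨by linarith, by linarith, by nlinarith⟩
    · ext i j
      fin_cases i <;> fin_cases j <;> simp [arrowMap, h01, h10, h20, h21] <;> ring

lemma exists_lorentzPow_sub (z : Fin 2 → Fin 3 → ℝ) :
    ∃ a ∈ lorentzPow 2, ∃ b ∈ lorentzPow 2, z = a - b := by
  refine ⟨fun i => z i + ![0, 0, Real.sqrt (z i 0 ^ 2 + z i 1 ^ 2) + |z i 2|], fun i => ?_,
    fun i => ![0, 0, Real.sqrt (z i 0 ^ 2 + z i 1 ^ 2) + |z i 2|], fun i => ?_, ?_⟩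
  · change √((z i 0 + 0) ^ 2 + (z i 1 + 0) ^ 2) ≤ z i 2 + (√(z i 0 ^ 2 + z i 1 ^ 2) + |z i 2|)
    rw [add_zero, add_zero]
    linarith [neg_abs_le (z i 2)]
  · simp [lorentzCone]
    positivity
  · ext i j
    exact (add_sub_cancel_right _ _).symm

/-- The singular case of the normal form: the slice is the linear image of `Q²`, and it spans a
space of dimension five. -/
lemma socr_of_singular {B : Matrix (Fin 3) (Fin 3) ℝ} (hB : B.IsSymm) (hdet : B.det = 0)
    (hind : Indefinite 3 B) :
    Module.finrank ℝ (Submodule.span ℝ (sliceOrth 3 B)) = 5 ∧ IsSOCR (sliceOrth 3 B) := by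
  obtain ⟨R, c, d, hR, hc, hN⟩ := exists_normal_form hB hind
  have hd : d = 0 := by
    have h := congrArg det hN
    rw [det_mul, det_mul, hdet] at h
    simpa [det_fin_three, hc] using h
  subst hd
  have himg : sliceOrth 3 B = (conjMap R ∘ₗ arrowMap) '' lorentzPow 2 := by
    rw [LinearMap.coe_comp, Set.image_comp, arrowMap_image, sliceOrth_eq_image hR hN]
    simp only [zero_mul, add_zero, mul_eq_zero, hc, OfNat.ofNat_ne_zero, false_or]
    rfl
  refine ⟨?_, 2, by norm_num, ⊤, conjMap R ∘ₗ arrowMap, by simpa using himg⟩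
  have hspan : Submodule.span ℝ (sliceOrth 3 B) = LinearMap.range (conjMap R ∘ₗ arrowMap) := by
    apply le_antisymm
    · rw [Submodule.span_le, himg]
      exact Set.image_subset_range _ _
    · rintro _ ⟨z, rfl⟩
      obtain ⟨a, ha, b, hb, rfl⟩ := exists_lorentzPow_sub z
      rw [map_sub, himg]
      exact Submodule.sub_mem _ (Submodule.subset_span ⟨a, ha, rfl⟩)
        (Submodule.subset_span ⟨b, hb, rfl⟩)
  -- The kernel of the parametrisation is the line of trades between the two corner entries.
  have hker : LinearMap.ker (conjMap R ∘ₗ arrowMap) =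
      Submodule.span ℝ {![![-1, 0, 1], ![1, 0, -1]]} := by
    have hu : IsUnit R.det := isUnit_iff_ne_zero.2 hR
    have hut : IsUnit Rᵀ.det := by rwa [det_transpose]
    ext z
    rw [LinearMap.mem_ker, Submodule.mem_span_singleton]
    constructor
    · intro h
      have h0 : arrowMap z = 0 := by
        have h' : R * arrowMap z * Rᵀ = 0 := h
        have h2 := congrArg (fun M => R⁻¹ * M * Rᵀ⁻¹) h'
        simpa [mul_assoc, mul_nonsing_inv _ hut, nonsing_inv_mul_cancel_left _ _ hu] using h2
      have e00 := congrFun (congrFun h0 0) 0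
      have e02 := congrFun (congrFun h0 0) 2
      have e11 := congrFun (congrFun h0 1) 1
      have e12 := congrFun (congrFun h0 1) 2
      have e22 := congrFun (congrFun h0 2) 2
      simp [arrowMap] at e00 e02 e11 e12 e22
      refine ⟨z 0 2, ?_⟩
      ext i j
      fin_cases i <;> fin_cases j <;> simp [e02, e12] <;> linarith
    · rintro ⟨t, rfl⟩
      have : arrowMap (t • ![![-1, 0, 1], ![1, 0, -1]]) = 0 := by
        ext i j
        fin_cases i <;> fin_cases j <;> simp [arrowMap]
      rw [LinearMap.comp_apply, this, map_zero]
  have hrn := LinearMap.finrank_range_add_finrank_ker (conjMap R ∘ₗ arrowMap)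
  rw [hker, finrank_span_singleton, Module.finrank_pi_fintype] at hrn
  · rw [hspan]
    simp at hrn
    omega
  · intro h
    simpa using congrFun (congrFun h 0) 0

/-! ### Five-dimensional slices -/

/-- The space of symmetric `3 × 3` matrices, parametrised by its upper triangular entries. -/
def symMap : (Fin 6 → ℝ) →ₗ[ℝ] Matrix (Fin 3) (Fin 3) ℝ where
  toFun v := !![v 0, v 1, v 2; v 1, v 3, v 4; v 2, v 4, v 5]
  map_add' x y := by
    ext i j
    fin_cases i <;> fin_cases j <;> simp
  map_smul' c x := by
    ext i j
    fin_cases i <;> fin_cases j <;> simp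

lemma symMap_isSymm (v : Fin 6 → ℝ) : (symMap v).IsSymm := by
  ext i j
  fin_cases i <;> fin_cases j <;> simp [symMap]

lemma symMap_eq_zero {v : Fin 6 → ℝ} (h : symMap v = 0) : v = 0 := by
  have e (i j : Fin 3) := congrFun (congrFun h i) j
  have := e 0 0; have := e 0 1; have := e 0 2; have := e 1 1; have := e 1 2; have := e 2 2
  ext i
  fin_cases i <;> simp_all [symMap]

/-- The hyperplane of symmetric matrices orthogonal to `B`. -/
def symOrth (B : Matrix (Fin 3) (Fin 3) ℝ) : Submodule ℝ (Matrix (Fin 3) (Fin 3) ℝ) where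
  carrier := {A | A.IsSymm ∧ trace (A * B) = 0}
  add_mem' := fun ha hb => ⟨ha.1.add hb.1, by rw [add_mul, trace_add, ha.2, hb.2, add_zero]⟩
  zero_mem' := ⟨isSymm_zero, by simp⟩
  smul_mem' := fun c A ha => ⟨ha.1.smul c, by rw [smul_mul, trace_smul, ha.2, smul_zero]⟩

lemma trace_mul_self_ne_zero {B : Matrix (Fin 3) (Fin 3) ℝ} (hB : B.IsSymm) (h0 : B ≠ 0) :
    trace (B * B) ≠ 0 := by
  intro h
  apply h0
  rw [← trace_conjTranspose_mul_self_eq_zero_iff, conjTranspose_eq_transpose_of_trivial, hB.eq, h]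

lemma finrank_symOrth_le {B : Matrix (Fin 3) (Fin 3) ℝ} (hB : B.IsSymm) (h0 : B ≠ 0) :
    Module.finrank ℝ (symOrth B) ≤ 5 := by
  have hsub : ∀ A : Matrix (Fin 3) (Fin 3) ℝ, A.IsSymm → A ∈ LinearMap.range symMap := by
    intro A hA
    refine ⟨![A 0 0, A 0 1, A 0 2, A 1 1, A 1 2, A 2 2], ?_⟩
    have := hA.apply 0 1
    have := hA.apply 0 2
    have := hA.apply 1 2
    ext i j
    fin_cases i <;> fin_cases j <;> simp_all [symMap]
  have hlt : symOrth B < LinearMap.range symMap :=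
    lt_of_le_of_ne (fun A hA => hsub A hA.1) fun h =>
      trace_mul_self_ne_zero hB h0 ((h ▸ hsub B hB : B ∈ symOrth B).2)
  have h1 := Submodule.finrank_lt_finrank_of_lt hlt
  have h2 := LinearMap.finrank_range_le symMap
  simp at h2
  omega

lemma exists_symm_orth {V : Submodule ℝ (Matrix (Fin 3) (Fin 3) ℝ)}
    (hsymm : ∀ A ∈ V, A.IsSymm) (hV : Module.finrank ℝ V = 5) :
    ∃ B : Matrix (Fin 3) (Fin 3) ℝ, B.IsSymm ∧ B ≠ 0 ∧ V = symOrth B := by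
  let φ : (Fin 6 → ℝ) →ₗ[ℝ] Module.Dual ℝ V :=
    { toFun := fun w =>
        { toFun := fun A => trace ((A : Matrix (Fin 3) (Fin 3) ℝ) * symMap w)
          map_add' := fun a b => by simp [add_mul]
          map_smul' := fun a b => by simp }
      map_add' := fun a b => by ext; simp [mul_add]
      map_smul' := fun a b => by ext; simp }
  have hker : LinearMap.ker φ ≠ ⊥ := by
    apply LinearMap.ker_ne_bot_of_finrank_lt
    rw [Subspace.dual_finrank_eq, hV]
    simp
  obtain ⟨w, hw, hw0⟩ := (Submodule.ne_bot_iff _).1 hker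
  have hB0 : symMap w ≠ 0 := fun h => hw0 (symMap_eq_zero h)
  refine ⟨symMap w, symMap_isSymm w, hB0, ?_⟩
  apply Submodule.eq_of_le_of_finrank_le
  · intro A hA
    exact ⟨hsymm A hA, LinearMap.congr_fun (LinearMap.mem_ker.1 hw) ⟨A, hA⟩⟩
  · rw [hV]
    exact finrank_symOrth_le (symMap_isSymm w) hB0

/-- If `B ≠ 0` is positive semidefinite then `S_B` is contained in a proper face of the psd cone:
all its elements kill a common vector `y ≠ 0`. So it does not span `B^⊥`. -/
lemma not_posSemidef_of_span {B : Matrix (Fin 3) (Fin 3) ℝ} (h0 : B ≠ 0)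
    (hspan : symOrth B ≤ Submodule.span ℝ (sliceOrth 3 B)) : ¬ B.PosSemidef := by
  intro hB
  obtain ⟨y, hy0, hy⟩ : ∃ y : Fin 3 → ℝ, y ≠ 0 ∧ ∀ A ∈ sliceOrth 3 B, A *ᵥ y = 0 := by
    obtain ⟨C, rfl⟩ : ∃ C : Matrix (Fin 3) (Fin 3) ℝ, B = Cᵀ * C := by
      open scoped MatrixOrder in
      exact CStarAlgebra.nonneg_iff_eq_star_mul_self.mp hB.nonneg
    have hC : ∃ i, C i ≠ 0 := by
      by_contra! hcon
      have : C = 0 := by ext i j; simp [hcon i]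
      simp [this] at h0
    obtain ⟨i, hi⟩ := hC
    refine ⟨C i, hi, fun A hA => ?_⟩
    have hp : (C * A * Cᵀ).PosSemidef := by
      simpa using hA.1.mul_mul_conjTranspose_same C
    have ht : trace (C * A * Cᵀ) = 0 := by
      rw [mul_assoc, trace_mul_comm, mul_assoc, hA.2]
    have hz := hp.trace_eq_zero_iff.1 ht
    have hii : star (C i) ⬝ᵥ A *ᵥ C i = 0 := by
      have := congrFun (congrFun hz i) i
      rw [mul_assoc] at this
      exact this
    exact (hA.1.dotProduct_mulVec_zero_iff _).1 hii
  have hker : ∀ A ∈ symOrth B, A *ᵥ y = 0 := by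
    intro A hA
    have hA' := hspan hA
    clear hA
    induction hA' using Submodule.span_induction with
    | mem A hA => exact hy A hA
    | zero => simp
    | add A A' _ _ h h' => rw [add_mulVec, h, h', add_zero]
    | smul c A _ h => rw [smul_mulVec, h, smul_zero]
  have hBs := isSymm_of_posSemidef hB
  have ht := trace_mul_self_ne_zero hBs h0
  set t := trace (B * B) with htdef
  have hline : ∀ A : Matrix (Fin 3) (Fin 3) ℝ, A.IsSymm →
      t • (A *ᵥ y) = trace (A * B) • (B *ᵥ y) := by
    intro A hA
    have hmem : t • A - trace (A * B) • B ∈ symOrth B := by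
      refine ⟨(hA.smul t).sub (hBs.smul _), ?_⟩
      rw [sub_mul, trace_sub, smul_mul, smul_mul, trace_smul, trace_smul, ← htdef, smul_eq_mul,
        smul_eq_mul]
      ring
    have := hker _ hmem
    rwa [sub_mulVec, smul_mulVec, smul_mulVec, sub_eq_zero] at this
  have hone := hline 1 isSymm_one
  rw [one_mulVec, one_mul] at hone
  have hyy : y ⬝ᵥ y ≠ 0 := fun h => hy0 (dotProduct_self_eq_zero.1 h)
  -- The vectors `A y` with `A` symmetric fill `ℝ³`, yet they all lie on the line through `B y`.
  have hall : ∀ x : Fin 3 → ℝ, ∃ s : ℝ, (t * (y ⬝ᵥ y)) • x = s • (B *ᵥ y) := by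
    intro x
    have hs : (vecMulVec x y + vecMulVec y x).IsSymm := by
      rw [IsSymm, transpose_add, transpose_vecMulVec, transpose_vecMulVec, add_comm]
    have h := hline _ hs
    rw [add_mulVec, vecMulVec_mulVec, vecMulVec_mulVec] at h
    refine ⟨trace ((vecMulVec x y + vecMulVec y x) * B) - (x ⬝ᵥ y) * trace B, ?_⟩
    rw [sub_smul, ← h, mul_smul (x ⬝ᵥ y), ← hone]
    ext i
    simp
    ring
  obtain ⟨s, hs⟩ := hall (Pi.single 0 1)
  obtain ⟨s', hs'⟩ := hall (Pi.single 1 1)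
  generalize B *ᵥ y = u at hs hs'
  have hN : t * (y ⬝ᵥ y) ≠ 0 := mul_ne_zero ht hyy
  generalize t * (y ⬝ᵥ y) = N at hs hs' hN
  have a0 : N = s * u 0 := by simpa using congrFun hs 0
  have a1 : 0 = s * u 1 := by simpa using congrFun hs 1
  have b1 : N = s' * u 1 := by simpa using congrFun hs' 1
  rcases mul_eq_zero.1 a1.symm with h | h
  · exact hN (by rw [a0, h, zero_mul])
  · exact hN (by rw [b1, h, mul_zero])

/-- The sets `S_B` with `B ∈ S³` singular and indefinite are exactly the
second-order cone representable slices of `S₊³` of dimension `5`. -/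
theorem sliceOrth_singular_indefinite_iff_socr_dim_five
    (S : Set (Matrix (Fin 3) (Fin 3) ℝ)) :
    (∃ B : Matrix (Fin 3) (Fin 3) ℝ,
        B.IsSymm ∧ B.det = 0 ∧ Indefinite 3 B ∧ S = sliceOrth 3 B) ↔
      (IsSlice 3 S ∧ Module.finrank ℝ (Submodule.span ℝ S) = 5 ∧ IsSOCR S) := by
  constructor
  · rintro ⟨B, hB, hdet, hind, rfl⟩
    refine ⟨⟨symOrth B, fun A hA => hA.1, ?_⟩, socr_of_singular hB hdet hind⟩
    ext A
    exact ⟨fun h => ⟨h.1, isSymm_of_posSemidef h.1, h.2⟩, fun h => ⟨h.1, h.2.2⟩⟩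
  · rintro ⟨⟨L, hL, hSL⟩, hdim, hsocr⟩
    have hle : Submodule.span ℝ S ≤ L :=
      Submodule.span_le.2 (by rw [hSL]; exact Set.inter_subset_right)
    obtain ⟨B, hB, hB0, hV⟩ := exists_symm_orth (fun A hA => hL A (hle hA)) hdim
    have hS : S = sliceOrth 3 B := by
      ext A
      constructor
      · intro hA
        have h1 : A ∈ symOrth B := hV ▸ Submodule.subset_span hA
        rw [hSL] at hA
        exact ⟨hA.1, h1.2⟩
      · intro hA
        have h1 : A ∈ symOrth B := ⟨isSymm_of_posSemidef hA.1, hA.2⟩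
        rw [← hV] at h1
        rw [hSL]
        exact ⟨hA.1, hle h1⟩
    have hneg : sliceOrth 3 (-B) = sliceOrth 3 B := by
      ext A
      simp [sliceOrth]
    have hnegO : symOrth (-B) ≤ symOrth B := fun A hA => ⟨hA.1, by simpa using hA.2⟩
    have hind : Indefinite 3 B :=
      ⟨not_posSemidef_of_span hB0 (by rw [← hS, hV]),
        not_posSemidef_of_span (neg_ne_zero.2 hB0) (by rw [hneg, ← hS, hV]; exact hnegO)⟩
    exact ⟨B, hB, det_eq_zero_of_isSOCR hB hind (hS ▸ hsocr), hind, hS⟩
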